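/- arXiv:2505.19102 — 8 statements merged into one kernel-verified Lean document; each statement's English description precedes it below -/
import Mathlib

section
/- Let X and Y be real-valued random variables on a common probability space and let p ≥ 1 be such that E[|Y|^p] < ∞. Then sup_{x∈ℝ} |P(X + Y ≤ x) − Φ(x)| ≤ sup_{x∈ℝ} |P(X ≤ x) − Φ(x)| + 2 (E[|Y|^p])^{1/(p+1)}. -/
open MeasureTheory ProbabilityTheory Set

/-- Cumulative distribution function of the standard Gaussian law `N(0,1)`. -/
noncomputable def stdGaussianCDF (x : ℝ) : ℝ :=
  ((gaussianReal 0 1) (Set.Iic x)).toReal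

lemma gaussianPDFReal_zero_one_le_one (x : ℝ) : gaussianPDFReal 0 1 x ≤ 1 := by
  have hsqrt : 1 ≤ √(2 * Real.pi * ((1 : NNReal) : ℝ)) := by
    rw [Real.one_le_sqrt]
    have := Real.pi_gt_three
    push_cast
    linarith
  have hexp : Real.exp (-(x - 0) ^ 2 / (2 * ((1 : NNReal) : ℝ))) ≤ 1 := by
    rw [Real.exp_le_one_iff]
    push_cast
    nlinarith [sq_nonneg (x - 0)]
  rw [gaussianPDFReal]
  exact mul_le_one₀ (inv_le_one_of_one_le₀ hsqrt) (Real.exp_nonneg _) hexp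

lemma gaussianReal_zero_one_le_volume (s : Set ℝ) : gaussianReal 0 1 s ≤ volume s := by
  rw [gaussianReal_apply _ one_ne_zero]
  calc ∫⁻ x in s, gaussianPDF 0 1 x ≤ ∫⁻ _ in s, 1 :=
        lintegral_mono fun x => ENNReal.ofReal_le_one.2 (gaussianPDFReal_zero_one_le_one x)
    _ = volume s := by simp

lemma stdGaussianCDF_add_le (x : ℝ) {ε : ℝ} (hε : 0 ≤ ε) :
    stdGaussianCDF (x + ε) ≤ stdGaussianCDF x + ε := by
  have hunion : Iic (x + ε) = Iic x ∪ Ioc x (x + ε) :=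
    (Iic_union_Ioc_eq_Iic (by linarith)).symm
  have hIoc : (gaussianReal 0 1).real (Ioc x (x + ε)) ≤ ε := by
    refine ENNReal.toReal_le_of_le_ofReal hε ?_
    simpa using gaussianReal_zero_one_le_volume (Ioc x (x + ε))
  calc stdGaussianCDF (x + ε) = (gaussianReal 0 1).real (Iic x ∪ Ioc x (x + ε)) := by
        rw [← hunion]; rfl
    _ ≤ (gaussianReal 0 1).real (Iic x) + (gaussianReal 0 1).real (Ioc x (x + ε)) :=
        measureReal_union_le _ _
    _ ≤ stdGaussianCDF x + ε := add_le_add le_rfl hIoc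

lemma bddAbove_abs_measure_sub_stdGaussianCDF {Ω : Type*} [MeasurableSpace Ω] (μ : Measure Ω)
    [IsProbabilityMeasure μ] (s : ℝ → Set Ω) :
    BddAbove (range fun x => |(μ (s x)).toReal - stdGaussianCDF x|) := by
  refine ⟨1, ?_⟩
  rintro _ ⟨x, rfl⟩
  have h₁ : (μ (s x)).toReal ≤ 1 := measureReal_le_one
  have h₂ : stdGaussianCDF x ≤ 1 := measureReal_le_one (μ := gaussianReal 0 1)
  have h₃ : 0 ≤ (μ (s x)).toReal := ENNReal.toReal_nonneg
  have h₄ : 0 ≤ stdGaussianCDF x := ENNReal.toReal_nonneg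
  exact abs_le.2 ⟨by linarith, by linarith⟩

/-- Markov's inequality at the level where the two sides balance. -/
lemma measureReal_lt_abs_le_rpow_integral {Ω : Type*} [MeasurableSpace Ω] (μ : Measure Ω)
    [IsFiniteMeasure μ] {Y : Ω → ℝ} {p : ℝ} (hp : 0 < p)
    (hint : Integrable (fun ω => |Y ω| ^ p) μ) :
    μ.real {ω | (∫ ω, |Y ω| ^ p ∂μ) ^ (1 / (p + 1)) < |Y ω|}
      ≤ (∫ ω, |Y ω| ^ p ∂μ) ^ (1 / (p + 1)) := by
  have hnonneg : 0 ≤ fun ω => |Y ω| ^ p := fun ω => Real.rpow_nonneg (abs_nonneg _) _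
  set M := ∫ ω, |Y ω| ^ p ∂μ with hM
  have hM0 : 0 ≤ M := integral_nonneg hnonneg
  have hε0 : 0 ≤ M ^ (1 / (p + 1)) := Real.rpow_nonneg hM0 _
  have hpow : (M ^ (1 / (p + 1))) ^ (p + 1) = M := by
    rw [← Real.rpow_mul hM0, one_div_mul_cancel (by linarith), Real.rpow_one]
  set ε := M ^ (1 / (p + 1))
  rcases hε0.eq_or_lt with hε | hε
  · have hM' : M = 0 := by rw [← hpow, ← hε, Real.zero_rpow (by linarith)]
    have hae := (integral_eq_zero_iff_of_nonneg hnonneg hint).1 (hM.symm.trans hM')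
    rw [← hε]
    refine le_of_eq ((measureReal_eq_zero_iff).2 ?_)
    refine measure_mono_null (fun ω hω => ?_) (ae_iff.1 hae)
    exact (Real.rpow_pos_of_pos hω p).ne'
  · have hεp : 0 < ε ^ p := Real.rpow_pos_of_pos hε p
    have hmarkov := mul_meas_ge_le_integral_of_nonneg (ae_of_all μ hnonneg) hint (ε ^ p)
    rw [← hM, ← hpow, Real.rpow_add hε, Real.rpow_one] at hmarkov
    refine le_trans (measureReal_mono fun ω hω => ?_) (le_of_mul_le_mul_left hmarkov hεp)
    exact Real.rpow_le_rpow hε.le (le_of_lt hω) hp.le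

theorem stmt1 {Ω : Type*} [MeasurableSpace Ω] (μ : Measure Ω) [IsProbabilityMeasure μ]
    (X Y : Ω → ℝ) (hX : Measurable X) (hY : Measurable Y)
    (p : ℝ) (hp : 1 ≤ p)
    (hint : Integrable (fun ω => |Y ω| ^ p) μ) :
    (⨆ x : ℝ, |(μ {ω | X ω + Y ω ≤ x}).toReal - stdGaussianCDF x|)
      ≤ (⨆ x : ℝ, |(μ {ω | X ω ≤ x}).toReal - stdGaussianCDF x|)
        + 2 * (∫ ω, |Y ω| ^ p ∂μ) ^ (1 / (p + 1)) := by
  have htail := measureReal_lt_abs_le_rpow_integral μ (by linarith) hint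
  set ε := (∫ ω, |Y ω| ^ p ∂μ) ^ (1 / (p + 1))
  have hε : 0 ≤ ε := measureReal_nonneg.trans htail
  have hdist (x : ℝ) := abs_le.1
    (le_ciSup (bddAbove_abs_measure_sub_stdGaussianCDF μ fun x => {ω | X ω ≤ x}) x)
  refine ciSup_le fun x => abs_le.2 ?_
  have hupper : μ.real {ω | X ω + Y ω ≤ x}
      ≤ μ.real {ω | X ω ≤ x + ε} + μ.real {ω | ε < |Y ω|} := by
    refine le_trans (measureReal_mono fun ω hω => ?_) (measureReal_union_le _ _)
    rcases lt_or_ge ε |Y ω| with h | h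
    · exact Or.inr h
    · refine Or.inl ?_
      have hω' : X ω + Y ω ≤ x := hω
      have := (abs_le.1 h).1
      change X ω ≤ x + ε
      linarith
  have hlower : μ.real {ω | X ω ≤ x - ε}
      ≤ μ.real {ω | X ω + Y ω ≤ x} + μ.real {ω | ε < |Y ω|} := by
    refine le_trans (measureReal_mono fun ω hω => ?_) (measureReal_union_le _ _)
    rcases lt_or_ge ε |Y ω| with h | h
    · exact Or.inr h
    · refine Or.inl ?_
      have hω' : X ω ≤ x - ε := hω
      have := (abs_le.1 h).2
      change X ω + Y ω ≤ x
      linarith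
  have hΦ₁ := stdGaussianCDF_add_le x hε
  have hΦ₂ := stdGaussianCDF_add_le (x - ε) hε
  rw [sub_add_cancel] at hΦ₂
  have h₁ := (hdist (x + ε)).2
  have h₂ := (hdist (x - ε)).1
  simp only [← measureReal_def] at h₁ h₂ ⊢
  constructor <;> linarith
end

section
/- Let ξ₁ ~ N(0, σ₁²) and ξ₂ ~ N(0, σ₂²) be centered Gaussian random variables with σ₂² > 0, and suppose |σ₁²/σ₂² − 1| ≤ δ for some δ ≥ 0. Then sup_{x∈ℝ} |P(ξ₁ ≤ x) − P(ξ₂ ≤ x)| ≤ (3/2)δ. -/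
open MeasureTheory ProbabilityTheory Set

/-- The cumulative distribution function of a centered Gaussian is that of the standard one,
rescaled by the standard deviation. -/
lemma gaussianReal_zero_Iic_eq_standard {v : NNReal} (hv : v ≠ 0) (x : ℝ) :
    gaussianReal 0 v (Iic x) = gaussianReal 0 1 (Iic (x / √(v : ℝ))) := by
  have hs : 0 < √(v : ℝ) := Real.sqrt_pos.mpr (by positivity)
  have hmap : (gaussianReal 0 1).map (√(v : ℝ) * ·) = gaussianReal 0 v := by
    rw [gaussianReal_map_const_mul, mul_zero, mul_one]
    congr 1
    ext
    simp
  rw [← hmap, Measure.map_apply (by fun_prop) measurableSet_Iic]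
  congr 1
  ext y
  simp [le_div_iff₀' hs]

/-- Increments of the standard Gaussian distribution function are integrals of the density. -/
lemma gaussianReal_standard_Iic_sub_Iic (a b : ℝ) :
    (gaussianReal 0 1 (Iic b)).toReal - (gaussianReal 0 1 (Iic a)).toReal
      = ∫ t in a..b, gaussianPDFReal 0 1 t := by
  have hval (c : ℝ) :
      (gaussianReal 0 1 (Iic c)).toReal = ∫ t in Iic c, gaussianPDFReal 0 1 t := by
    rw [gaussianReal_apply_eq_integral 0 one_ne_zero, ENNReal.toReal_ofReal]
    exact integral_nonneg fun t => gaussianPDFReal_nonneg 0 1 t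
  rw [hval, hval]
  exact intervalIntegral.integral_Iic_sub_Iic (integrable_gaussianPDFReal 0 1).integrableOn
    (integrable_gaussianPDFReal 0 1).integrableOn

/-- The standard Gaussian density decreases in the absolute value of its argument. -/
lemma gaussianPDFReal_standard_le_of_abs_le {s t : ℝ} (hst : |s| ≤ |t|) :
    gaussianPDFReal 0 1 t ≤ gaussianPDFReal 0 1 s := by
  have := sq_le_sq.mpr hst
  simp only [gaussianPDFReal, sub_zero, NNReal.coe_one, mul_one]
  gcongr

lemma abs_mul_gaussianPDFReal_standard_le (a : ℝ) :
    |a| * gaussianPDFReal 0 1 a ≤ 1 / 2 := by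
  have hsqrt : 2 ≤ √(2 * Real.pi) :=
    Real.le_sqrt_of_sq_le (by nlinarith [Real.pi_gt_three])
  have hexp : |a| ≤ Real.exp (a ^ 2 / 2) := by
    have := Real.add_one_le_exp (a ^ 2 / 2)
    nlinarith [sq_nonneg (|a| - 1), sq_abs a]
  have hpdf : gaussianPDFReal 0 1 a = (√(2 * Real.pi) * Real.exp (a ^ 2 / 2))⁻¹ := by
    simp [gaussianPDFReal, neg_div, Real.exp_neg, mul_comm]
  rw [hpdf, ← div_eq_mul_inv, div_le_iff₀ (by positivity)]
  nlinarith [Real.exp_pos (a ^ 2 / 2)]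

/-- Dilating the argument of the standard Gaussian distribution function by `k ≥ 1` changes
its value by at most `(k - 1) / 2`. -/
lemma abs_gaussianReal_standard_Iic_mul_sub_le {k : ℝ} (hk : 1 ≤ k) (a : ℝ) :
    |(gaussianReal 0 1 (Iic (k * a))).toReal - (gaussianReal 0 1 (Iic a)).toReal|
      ≤ (k - 1) / 2 := by
  have hbound : ∀ t ∈ uIoc a (k * a),
      ‖gaussianPDFReal 0 1 t‖ ≤ gaussianPDFReal 0 1 a := by
    intro t ht
    rw [Real.norm_of_nonneg (gaussianPDFReal_nonneg 0 1 t)]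
    apply gaussianPDFReal_standard_le_of_abs_le
    rcases le_total 0 a with ha | ha
    · have : a ≤ k * a := by nlinarith
      rw [uIoc_of_le this] at ht
      exact abs_le_abs_of_nonneg ha ht.1.le
    · have : k * a ≤ a := by nlinarith
      rw [uIoc_of_ge this] at ht
      exact abs_le_abs_of_nonpos ha ht.2
  have hint := intervalIntegral.norm_integral_le_of_norm_le_const hbound
  rw [gaussianReal_standard_Iic_sub_Iic, ← Real.norm_eq_abs]
  refine hint.trans ?_
  rw [show k * a - a = (k - 1) * a by ring, abs_mul, abs_of_nonneg (sub_nonneg.mpr hk)]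
  nlinarith [abs_mul_gaussianPDFReal_standard_le a]

/-- Comparison of the distribution functions of two centered Gaussians with `v ≤ w`. -/
lemma abs_gaussianReal_Iic_sub_le {v w : NNReal} (hv : v ≠ 0) (hvw : v ≤ w) (x : ℝ) :
    |(gaussianReal 0 v (Iic x)).toReal - (gaussianReal 0 w (Iic x)).toReal|
      ≤ (√((w : ℝ) / v) - 1) / 2 := by
  have hv' : 0 < v := pos_of_ne_zero hv
  have hw : 0 < w := hv'.trans_le hvw
  have hsw : 0 < √(w : ℝ) := Real.sqrt_pos.mpr (by exact_mod_cast hw)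
  have hk : 1 ≤ √((w : ℝ) / v) :=
    Real.one_le_sqrt.mpr ((one_le_div (by exact_mod_cast hv')).mpr (by exact_mod_cast hvw))
  have hx : x / √(v : ℝ) = √((w : ℝ) / v) * (x / √(w : ℝ)) := by
    rw [Real.sqrt_div w.coe_nonneg]
    field_simp
  rw [gaussianReal_zero_Iic_eq_standard hv, gaussianReal_zero_Iic_eq_standard hw.ne', hx]
  exact abs_gaussianReal_standard_Iic_mul_sub_le hk _

theorem stmt2 (v₁ v₂ : NNReal) (hv₂ : 0 < (v₂ : ℝ)) (δ : ℝ) (hδ : 0 ≤ δ)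
    (h : |(v₁ : ℝ) / (v₂ : ℝ) - 1| ≤ δ) :
    (⨆ x : ℝ,
        |((gaussianReal 0 v₁) (Set.Iic x)).toReal - ((gaussianReal 0 v₂) (Set.Iic x)).toReal|)
      ≤ (3 / 2) * δ := by
  refine ciSup_le fun x => ?_
  rcases le_or_gt (2 / 3) δ with hlarge | hsmall
  · have hprob (v : NNReal) : (gaussianReal 0 v (Iic x)).toReal ∈ Icc (0 : ℝ) 1 :=
      ⟨ENNReal.toReal_nonneg, measureReal_le_one⟩
    have h₁ := hprob v₁
    have h₂ := hprob v₂
    rw [abs_le]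
    constructor <;> linarith [h₁.1, h₁.2, h₂.1, h₂.2]
  obtain ⟨hlow, hhigh⟩ := abs_le.mp h
  have hv₂' : v₂ ≠ 0 := by exact_mod_cast hv₂.ne'
  have hv₁' : v₁ ≠ 0 := by
    rintro rfl
    simp at hlow
    linarith
  have hv₁ : 0 < (v₁ : ℝ) := by positivity
  rcases le_total v₂ v₁ with hle | hle
  · rw [abs_sub_comm]
    refine (abs_gaussianReal_Iic_sub_le hv₂' hle x).trans ?_
    have hr : 1 ≤ (v₁ : ℝ) / v₂ := (one_le_div hv₂).mpr (by exact_mod_cast hle)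
    have : √((v₁ : ℝ) / v₂) ≤ (v₁ : ℝ) / v₂ := by
      rw [Real.sqrt_le_left (by positivity)]
      nlinarith
    linarith
  · refine (abs_gaussianReal_Iic_sub_le hv₁' hle x).trans ?_
    have hk : 1 ≤ √((v₂ : ℝ) / v₁) :=
      Real.one_le_sqrt.mpr ((one_le_div hv₁).mpr (by exact_mod_cast hle))
    have hsq : √((v₂ : ℝ) / v₁) ^ 2 * ((v₁ : ℝ) / v₂) = 1 := by
      rw [Real.sq_sqrt (by positivity)]
      field_simp
    generalize √((v₂ : ℝ) / v₁) = k at hk hsq ⊢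
    generalize (v₁ : ℝ) / v₂ = r at hlow hsq
    have hk2 : k ≤ 2 := by nlinarith
    have hfactor : k ^ 2 * (1 - r) = (k - 1) * (k + 1) := by linear_combination -hsq
    have hdelta : k ^ 2 * (1 - r) ≤ k ^ 2 * δ := by gcongr; linarith
    by_contra! hcon
    nlinarith [mul_nonneg (sub_nonneg.mpr hk) (sub_nonneg.mpr hk2), sq_nonneg k]
end

section
/- Let A > 0, γ ∈ (1/2, 1), and let i, n be integers with 0 ≤ i ≤ n−1. Then Σ_{j=i}^{n−1} exp{−A(j^{1−γ} − i^{1−γ})} is bounded by: (a) 1 + exp{1/(1−γ)} · Γ(1/(1−γ)) / (A^{1/(1−γ)}(1−γ)) if i ≥ 1 and A·i^{1−γ} ≤ 1/(1−γ); (b) 1 + i^γ/(A(1−γ)²) if i ≥ 1 and A·i^{1−γ} > 1/(1−γ); (c) 1 + Γ(1/(1−γ)) / (A^{1/(1−γ)}(1−γ)) if i = 0. -/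
open Finset

lemma antitoneOn_exp_neg_mul_rpow_sub {A p : ℝ} (hA : 0 ≤ A) (hp : 0 ≤ p) (c : ℝ) :
    AntitoneOn (fun x : ℝ => Real.exp (-A * (x ^ p - c))) (Set.Ici 0) := by
  intro x hx y _ hxy
  have := mul_le_mul_of_nonneg_left (Real.rpow_le_rpow hx hxy hp) hA
  exact Real.exp_le_exp.mpr (by linarith)

/-- Splitting off the first term and comparing the rest of the sum with an integral. -/
lemma sum_exp_neg_mul_rpow_sub_le_integral {A p : ℝ} (hA : 0 ≤ A) (hp : 0 ≤ p) {i m : ℕ}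
    (him : i ≤ m) :
    ∑ j ∈ Icc i m, Real.exp (-A * ((j : ℝ) ^ p - (i : ℝ) ^ p)) ≤
      1 + ∫ x in (i : ℝ)..m, Real.exp (-A * (x ^ p - (i : ℝ) ^ p)) := by
  have hanti : AntitoneOn (fun x : ℝ => Real.exp (-A * (x ^ p - (i : ℝ) ^ p)))
      (Set.Icc (i : ℝ) m) :=
    (antitoneOn_exp_neg_mul_rpow_sub hA hp _).mono fun x hx => (Nat.cast_nonneg i).trans hx.1
  have h := hanti.sum_le_integral_Ico him
  rw [← Finset.Ico_succ_right_eq_Icc, Nat.succ_eq_succ, Nat.succ_eq_add_one,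
    Finset.sum_eq_sum_Ico_succ_bot (by omega)]
  rw [Finset.sum_Ico_add' (fun j : ℕ => Real.exp (-A * ((j : ℝ) ^ p - (i : ℝ) ^ p))) i m 1] at h
  simpa using h

lemma integral_exp_neg_mul_rpow_eq_Gamma_div {A p : ℝ} (hA : 0 < A) (hp : 0 < p) :
    ∫ x in Set.Ioi (0 : ℝ), Real.exp (-A * x ^ p) =
      Real.Gamma (1 / p) / (A ^ (1 / p) * p) := by
  rw [integral_exp_neg_mul_rpow hp hA, Real.Gamma_add_one (by positivity), neg_div,
    Real.rpow_neg hA.le]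
  field_simp

lemma integrableOn_exp_neg_mul_rpow {A p : ℝ} (hA : 0 < A) (hp : 0 < p) :
    MeasureTheory.IntegrableOn (fun x : ℝ => Real.exp (-A * x ^ p)) (Set.Ioi 0) := by
  simpa using integrableOn_rpow_mul_exp_neg_mul_rpow (s := 0) (by norm_num) hp hA

lemma integral_exp_neg_mul_rpow_sub_le_Gamma {A p a b : ℝ} (hA : 0 < A) (hp : 0 < p)
    (ha : 0 ≤ a) (hab : a ≤ b) :
    ∫ x in a..b, Real.exp (-A * (x ^ p - a ^ p)) ≤
      Real.exp (A * a ^ p) * (Real.Gamma (1 / p) / (A ^ (1 / p) * p)) := by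
  have hsplit : ∀ x : ℝ, Real.exp (-A * (x ^ p - a ^ p)) =
      Real.exp (A * a ^ p) * Real.exp (-A * x ^ p) := fun x => by
    rw [← Real.exp_add]; ring_nf
  simp_rw [hsplit]
  rw [intervalIntegral.integral_const_mul, intervalIntegral.integral_of_le hab,
    ← integral_exp_neg_mul_rpow_eq_Gamma_div hA hp]
  refine mul_le_mul_of_nonneg_left ?_ (Real.exp_pos _).le
  refine MeasureTheory.setIntegral_mono_set (integrableOn_exp_neg_mul_rpow hA hp) ?_ ?_
  · exact Filter.Eventually.of_forall fun x => (Real.exp_pos _).le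
  · exact LE.le.eventuallyLE fun x hx => ha.trans_lt hx.1

/-- For `1 / p ≤ A * a ^ p`, the function
`x ↦ -x ^ (1 - p) * exp (-A * (x ^ p - a ^ p)) / (A * p ^ 2)`
has a derivative above the integrand on `(a, ∞)`. -/
lemma integral_exp_neg_mul_rpow_sub_le_rpow {A p a b : ℝ} (hA : 0 < A) (hp : 0 < p)
    (hp1 : p ≤ 1) (ha : 0 < a) (hab : a ≤ b) (hlarge : 1 / p ≤ A * a ^ p) :
    ∫ x in a..b, Real.exp (-A * (x ^ p - a ^ p)) ≤ a ^ (1 - p) / (A * p ^ 2) := by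
  have hderiv : ∀ x : ℝ, 0 < x →
      HasDerivAt (fun x : ℝ => -(x ^ (1 - p) * Real.exp (-A * (x ^ p - a ^ p)) / (A * p ^ 2)))
        ((1 / p - (1 - p) * x ^ (-p) / (A * p ^ 2)) * Real.exp (-A * (x ^ p - a ^ p))) x := by
    intro x hx
    have h1 := Real.hasDerivAt_rpow_const (x := x) (p := 1 - p) (Or.inl hx.ne')
    have h2 := Real.hasDerivAt_rpow_const (x := x) (p := p) (Or.inl hx.ne')
    have h3 := ((h2.sub_const (a ^ p)).const_mul (-A)).exp
    refine ((h1.mul h3).div_const (A * p ^ 2)).neg.congr_deriv ?_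
    have hone : x ^ (1 - p) * x ^ (p - 1) = 1 := by
      rw [← Real.rpow_add hx]; simp
    rw [show 1 - p - 1 = -p by ring]
    field_simp
    linear_combination (A * p) * hone
  have hanti : AntitoneOn (fun x : ℝ => Real.exp (-A * (x ^ p - a ^ p))) (Set.Icc a b) :=
    (antitoneOn_exp_neg_mul_rpow_sub hA.le hp.le _).mono fun x hx => ha.le.trans hx.1
  have hle := intervalIntegral.integral_le_sub_of_hasDeriv_right_of_le hab
    (fun x hx => (hderiv x (ha.trans_le hx.1)).continuousAt.continuousWithinAt)
    (fun x hx => (hderiv x (ha.trans hx.1)).hasDerivWithinAt)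
    (hanti.integrableOn_isCompact isCompact_Icc) (fun x hx => ?_)
  · refine hle.trans ?_
    have hb : 0 ≤ b ^ (1 - p) * Real.exp (-A * (b ^ p - a ^ p)) / (A * p ^ 2) := by
      have := ha.le.trans hab
      positivity
    simp only [sub_self, mul_zero, Real.exp_zero, mul_one]
    linarith
  · refine le_mul_of_one_le_left (Real.exp_pos _).le ?_
    have hx0 : 0 < x := ha.trans hx.1
    have hxp : 0 < x ^ p := Real.rpow_pos_of_pos hx0 p
    have hx1 : 1 ≤ A * x ^ p * p := by
      rw [← div_le_iff₀ hp]
      exact hlarge.trans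
        (mul_le_mul_of_nonneg_left (Real.rpow_le_rpow ha.le hx.1.le hp.le) hA.le)
    have hbound : (1 - p) * x ^ (-p) / (A * p ^ 2) ≤ (1 - p) / p := by
      rw [Real.rpow_neg hx0.le, div_le_div_iff₀ (by positivity) hp,
        show (1 - p) * (A * p ^ 2) = (1 - p) * p * (A * p) by ring,
        show (1 - p) * (x ^ p)⁻¹ * p = (1 - p) * p * (x ^ p)⁻¹ by ring]
      refine mul_le_mul_of_nonneg_left ?_ (mul_nonneg (by linarith) hp.le)
      rw [inv_le_iff_one_le_mul₀ hxp]
      linarith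
    have hsum : 1 / p - (1 - p) / p = 1 := by field_simp; ring
    linarith

theorem stmt4 (A γ : ℝ) (hA : 0 < A) (hγ : γ ∈ Set.Ioo (1/2 : ℝ) 1)
    (i n : ℕ) (hn : 1 ≤ n) (hi : i ≤ n - 1) :
    ((1 ≤ i ∧ A * (i : ℝ) ^ (1 - γ) ≤ 1 / (1 - γ)) →
      ∑ j ∈ Finset.Icc i (n - 1), Real.exp (-A * ((j : ℝ) ^ (1 - γ) - (i : ℝ) ^ (1 - γ)))
        ≤ 1 + Real.exp (1 / (1 - γ)) *
            (Real.Gamma (1 / (1 - γ)) / (A ^ (1 / (1 - γ)) * (1 - γ)))) ∧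
    ((1 ≤ i ∧ 1 / (1 - γ) < A * (i : ℝ) ^ (1 - γ)) →
      ∑ j ∈ Finset.Icc i (n - 1), Real.exp (-A * ((j : ℝ) ^ (1 - γ) - (i : ℝ) ^ (1 - γ)))
        ≤ 1 + (i : ℝ) ^ γ / (A * (1 - γ) ^ 2)) ∧
    (i = 0 →
      ∑ j ∈ Finset.Icc i (n - 1), Real.exp (-A * ((j : ℝ) ^ (1 - γ) - (i : ℝ) ^ (1 - γ)))
        ≤ 1 + Real.Gamma (1 / (1 - γ)) / (A ^ (1 / (1 - γ)) * (1 - γ))) := by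
  have hp : 0 < 1 - γ := by linarith [hγ.2]
  have hcast : (i : ℝ) ≤ ((n - 1 : ℕ) : ℝ) := Nat.cast_le.mpr hi
  have hsum := sum_exp_neg_mul_rpow_sub_le_integral hA.le hp.le hi
  have hGamma := integral_exp_neg_mul_rpow_sub_le_Gamma hA hp (Nat.cast_nonneg i) hcast
  refine ⟨fun ⟨_, hsmall⟩ => ?_, fun ⟨hi1, hlarge⟩ => ?_, fun hi0 => ?_⟩
  · refine hsum.trans (add_le_add_right (hGamma.trans ?_) 1)
    have := Real.Gamma_pos_of_pos (one_div_pos.mpr hp)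
    gcongr
  · have h := integral_exp_neg_mul_rpow_sub_le_rpow hA hp (by linarith [hγ.1])
      (Nat.cast_pos.mpr hi1) hcast hlarge.le
    rw [sub_sub_cancel] at h
    linarith
  · have hexp : Real.exp (A * (i : ℝ) ^ (1 - γ)) = 1 := by
      rw [hi0, Nat.cast_zero, Real.zero_rpow hp.ne', mul_zero, Real.exp_zero]
    rw [hexp, one_mul] at hGamma
    linarith
end

section
/- Let b, c₀ > 0, γ ∈ (1/2, 1), k₀ ≥ 0, and set α_ℓ = c₀/(ℓ+k₀)^γ. Assume b·c₀ < 1 and k₀^{1−γ} ≥ 2/(b·c₀). Then for all integers 1 ≤ ℓ ≤ n−1, Σ_{k=ℓ}^{n−1} α_ℓ · ∏_{j=ℓ+1}^{k} (1 − b·α_j) ≤ c₀ + 2/(b(1−γ)), where the product over an empty index range equals 1. -/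
open Finset

/-- A telescoping bound: if `A` is a Lyapunov sequence for the factors `q`, then the sums of the
partial products of `q` are controlled by the initial value of `A`. -/
lemma sum_prod_Icc_add_le (q A : ℕ → ℝ) (ℓ : ℕ) (hq : ∀ k, ℓ < k → 0 ≤ q k)
    (hA : ∀ k, ℓ ≤ k → q (k + 1) * (A (k + 1) + 1) ≤ A k) (m : ℕ) (hm : ℓ ≤ m) :
    ∑ k ∈ Icc ℓ m, ∏ j ∈ Icc (ℓ + 1) k, q j + (∏ j ∈ Icc (ℓ + 1) m, q j) * A m
      ≤ 1 + A ℓ := by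
  induction m, hm using Nat.le_induction with
  | base => simp
  | succ m hm ih =>
    rw [sum_Icc_succ_top (by omega), prod_Icc_succ_top (by omega)]
    have hP : 0 ≤ ∏ j ∈ Icc (ℓ + 1) m, q j :=
      prod_nonneg fun j hj => hq j (by simp only [mem_Icc] at hj; omega)
    nlinarith [mul_le_mul_of_nonneg_left (hA m hm) hP]

/-- The tangent-line bound for the concave function `x ↦ x ^ γ`. -/
lemma add_one_rpow_le_add_div {x γ : ℝ} (hx : 0 < x) (hγ₀ : 0 ≤ γ) (hγ₁ : γ ≤ 1) :
    (x + 1) ^ γ ≤ x ^ γ + γ / x ^ (1 - γ) := by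
  have bernoulli : (1 + 1 / x) ^ γ ≤ 1 + γ * (1 / x) :=
    rpow_one_add_le_one_add_mul_self (by linarith [one_div_pos.2 hx]) hγ₀ hγ₁
  have hsplit : x ^ (1 - γ) = x / x ^ γ := by rw [Real.rpow_sub hx, Real.rpow_one]
  have hpos : 0 < x ^ γ := Real.rpow_pos_of_pos hx γ
  calc (x + 1) ^ γ = x ^ γ * (1 + 1 / x) ^ γ := by
        rw [← Real.mul_rpow hx.le (by positivity)]
        congr 1
        field_simp
    _ ≤ x ^ γ * (1 + γ * (1 / x)) := by gcongr
    _ = x ^ γ + γ / x ^ (1 - γ) := by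
        rw [hsplit]
        field_simp

theorem stmt5 (b c₀ γ k₀ : ℝ) (hb : 0 < b) (hc₀ : 0 < c₀) (hγ : γ ∈ Set.Ioo (1/2 : ℝ) 1)
    (hk₀ : 0 ≤ k₀) (hbc : b * c₀ < 1) (hk₀' : 2 / (b * c₀) ≤ k₀ ^ (1 - γ))
    (α : ℕ → ℝ) (hα : ∀ k : ℕ, α k = c₀ / ((k : ℝ) + k₀) ^ γ)
    (ℓ n : ℕ) (hℓ : 1 ≤ ℓ) (hℓn : ℓ ≤ n - 1) :
    ∑ k ∈ Finset.Icc ℓ (n - 1), α ℓ * ∏ j ∈ Finset.Icc (ℓ + 1) k, (1 - b * α j)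
      ≤ c₀ + 2 / (b * (1 - γ)) := by
  obtain ⟨hγ₀, hγ₁⟩ := hγ
  have hbc₀ : 0 < b * c₀ := mul_pos hb hc₀
  have hk₀_pos : 0 < k₀ := by
    refine hk₀.lt_of_ne fun h => ?_
    rw [← h, Real.zero_rpow (by linarith)] at hk₀'
    exact absurd hk₀' (not_le.2 (by positivity))
  have hpow : ∀ k : ℕ, 0 < ((k : ℝ) + k₀) ^ γ := fun k => by positivity
  have hα_pos : ∀ k, 0 < α k := fun k => by
    rw [hα]
    exact div_pos hc₀ (hpow k)
  have hα_le : ∀ k, 1 ≤ k → α k ≤ c₀ := fun k hk => by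
    have hk' : (1 : ℝ) ≤ k := by exact_mod_cast hk
    rw [hα]
    exact div_le_self hc₀.le (Real.one_le_rpow (by linarith) (by linarith))
  have hq : ∀ k, ℓ < k → 0 ≤ 1 - b * α k := fun k hk => by
    nlinarith [hα_le k (by omega)]
  have hα_mul : ∀ k, α k * (2 / (b * c₀) * ((k : ℝ) + k₀) ^ γ) = 2 / b := fun k => by
    have := (hpow k).ne'
    rw [hα]
    field_simp
  have hlyapunov : ∀ k, ℓ ≤ k →
      (1 - b * α (k + 1)) * (2 / (b * c₀) * (((k + 1 : ℕ) : ℝ) + k₀) ^ γ + 1)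
        ≤ 2 / (b * c₀) * ((k : ℝ) + k₀) ^ γ := fun k _ => by
    have hx : 0 < (k : ℝ) + k₀ := by positivity
    have htangent := add_one_rpow_le_add_div hx (by linarith : 0 ≤ γ) hγ₁.le
    have hbase : 2 / (b * c₀) ≤ ((k : ℝ) + k₀) ^ (1 - γ) :=
      hk₀'.trans (Real.rpow_le_rpow hk₀ (by linarith [k.cast_nonneg (α := ℝ)]) (by linarith))
    have hincr : 2 / (b * c₀) * (γ / ((k : ℝ) + k₀) ^ (1 - γ)) ≤ 1 := by
      rw [← mul_div_assoc, div_le_one (by positivity)]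
      exact (mul_le_of_le_one_right (by positivity) hγ₁.le).trans hbase
    have hcast : ((k + 1 : ℕ) : ℝ) + k₀ = (k : ℝ) + k₀ + 1 := by push_cast; ring
    have hdrift : b * (α (k + 1) * (2 / (b * c₀) * (((k + 1 : ℕ) : ℝ) + k₀) ^ γ)) = 2 := by
      rw [hα_mul]
      field_simp
    rw [hcast] at hdrift ⊢
    have hscaled := mul_le_mul_of_nonneg_left htangent (by positivity : 0 ≤ 2 / (b * c₀))
    nlinarith [mul_pos hb (hα_pos (k + 1))]
  have hsum := sum_prod_Icc_add_le (fun k => 1 - b * α k)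
    (fun k => 2 / (b * c₀) * ((k : ℝ) + k₀) ^ γ) ℓ hq hlyapunov (n - 1) hℓn
  have hrest : 0 ≤ (∏ j ∈ Icc (ℓ + 1) (n - 1), (1 - b * α j)) *
      (2 / (b * c₀) * (((n - 1 : ℕ) : ℝ) + k₀) ^ γ) :=
    mul_nonneg (prod_nonneg fun j hj => hq j (by simp only [mem_Icc] at hj; omega))
      (by positivity)
  rw [← mul_sum]
  calc α ℓ * ∑ k ∈ Icc ℓ (n - 1), ∏ j ∈ Icc (ℓ + 1) k, (1 - b * α j)
      ≤ α ℓ * (1 + 2 / (b * c₀) * ((ℓ : ℝ) + k₀) ^ γ) :=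
        mul_le_mul_of_nonneg_left (by linarith) (hα_pos ℓ).le
    _ = α ℓ + 2 / b := by rw [mul_add, hα_mul, mul_one]
    _ ≤ c₀ + 2 / (b * (1 - γ)) := by
        refine add_le_add (hα_le ℓ hℓ) (div_le_div_of_nonneg_left (by norm_num) ?_ ?_)
        · exact mul_pos hb (by linarith)
        · exact mul_le_of_le_one_right hb.le (by linarith)
end

section
/- Let b > 0, γ ∈ (0,1), c₀ ≤ 1/b, k₀ ≥ 1 with k₀ ≥ (2γ/(b·c₀))^{1/(1−γ)}, and set α_k = c₀/(k+k₀)^γ. Then for all integers 0 ≤ j ≤ k, α_j · ∏_{ℓ=j+1}^{k} (1 − α_ℓ·b) ≤ α_k, where the product over an empty index range equals 1. -/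
open Finset

/-- Increments of `x ↦ x ^ γ` over unit steps, for `γ ∈ [0, 1]`. -/
theorem add_one_rpow_le_rpow_add_div {x γ : ℝ} (hx : 0 < x) (hγ0 : 0 ≤ γ) (hγ1 : γ ≤ 1) :
    (x + 1) ^ γ ≤ x ^ γ + γ / x ^ (1 - γ) := by
  have hsplit : x = x ^ γ * x ^ (1 - γ) := by
    rw [← Real.rpow_add hx, add_sub_cancel, Real.rpow_one]
  have hpos : 0 < x ^ γ := Real.rpow_pos_of_pos hx γ
  have hpos' : 0 < x ^ (1 - γ) := Real.rpow_pos_of_pos hx _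
  have hinv : 0 ≤ x⁻¹ := (inv_pos.2 hx).le
  calc (x + 1) ^ γ = x ^ γ * (1 + x⁻¹) ^ γ := by
        rw [← Real.mul_rpow hx.le (by positivity)]
        congr 1
        field_simp
    _ ≤ x ^ γ * (1 + γ * x⁻¹) := by
        gcongr
        exact rpow_one_add_le_one_add_mul_self (by linarith) hγ0 hγ1
    _ = x ^ γ + γ * (x ^ γ * x⁻¹) := by ring
    _ = x ^ γ + γ / x ^ (1 - γ) := by
        have : x ^ γ * x⁻¹ = (x ^ (1 - γ))⁻¹ := by
          rw [← div_eq_mul_inv, div_eq_iff hx.ne', eq_inv_mul_iff_mul_eq₀ hpos'.ne', mul_comm]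
          exact hsplit.symm
        rw [this, div_eq_mul_inv]

theorem stmt7 (b c₀ γ k₀ : ℝ) (hb : 0 < b) (hc₀ : 0 < c₀) (hγ : γ ∈ Set.Ioo (0 : ℝ) 1)
    (hcb : c₀ ≤ 1 / b) (hk₀1 : 1 ≤ k₀) (hk₀ : (2 * γ / (b * c₀)) ^ (1 / (1 - γ)) ≤ k₀)
    (α : ℕ → ℝ) (hα : ∀ k : ℕ, α k = c₀ / ((k : ℝ) + k₀) ^ γ)
    (j k : ℕ) (hj : j ≤ k) :
    α j * ∏ ℓ ∈ Finset.Icc (j + 1) k, (1 - α ℓ * b) ≤ α k := by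
  obtain ⟨hγ0, hγ1⟩ := hγ
  have hbc : 0 < b * c₀ := mul_pos hb hc₀
  have hcb' : c₀ * b ≤ 1 := (le_div_iff₀ hb).1 hcb
  have hα_le (n : ℕ) : α n * b ≤ 1 := by
    have hle : α n ≤ c₀ := by
      rw [hα]
      exact div_le_self hc₀.le
        (Real.one_le_rpow (by linarith [n.cast_nonneg (α := ℝ)]) hγ0.le)
    exact (mul_le_mul_of_nonneg_right hle hb.le).trans hcb'
  have hstep (n : ℕ) : α n * (1 - α (n + 1) * b) ≤ α (n + 1) := by
    have hxk : k₀ ≤ (n : ℝ) + k₀ := by linarith [n.cast_nonneg (α := ℝ)]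
    have hcast : ((n + 1 : ℕ) : ℝ) + k₀ = (n : ℝ) + k₀ + 1 := by push_cast; ring
    rw [hα, hα, hcast]
    generalize (n : ℝ) + k₀ = x at hxk
    have hx : 0 < x := by linarith
    have hpow : 2 * γ / (b * c₀) ≤ x ^ (1 - γ) := by
      rw [one_div] at hk₀
      exact (Real.rpow_inv_le_iff_of_pos (by positivity) hx.le (by linarith)).1 (hk₀.trans hxk)
    have hincr : γ / x ^ (1 - γ) ≤ b * c₀ := by
      rw [div_le_iff₀ hbc] at hpow
      rw [div_le_iff₀ (Real.rpow_pos_of_pos hx _)]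
      linarith
    have hY := add_one_rpow_le_rpow_add_div hx hγ0.le hγ1.le
    have hXpos : 0 < x ^ γ := Real.rpow_pos_of_pos hx γ
    have hYpos : 0 < (x + 1) ^ γ := Real.rpow_pos_of_pos (by linarith) γ
    calc c₀ / x ^ γ * (1 - c₀ / (x + 1) ^ γ * b)
        = c₀ / (x + 1) ^ γ * (((x + 1) ^ γ - b * c₀) / x ^ γ) := by field_simp
      _ ≤ c₀ / (x + 1) ^ γ * 1 := by
          gcongr
          rw [div_le_one hXpos]
          linarith
      _ = c₀ / (x + 1) ^ γ := mul_one _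
  induction k, hj using Nat.le_induction with
  | base => simp
  | succ n hn ih =>
    rw [Finset.prod_Icc_succ_top (by omega), ← mul_assoc]
    exact (mul_le_mul_of_nonneg_right ih (by linarith [hα_le (n + 1)])).trans (hstep n)
end

section
/- Let r > 0, γ ∈ (0,1), c₀ > 0, k₀ ≥ 1 with k₀ ≥ (2γ/(r·c₀))^{1/(1−γ)}, and set α_k = c₀/(k+k₀)^γ. Then for every integer k ≥ 0, α_k/α_{k+1} ≤ 1 + r·α_{k+1}. -/
theorem stmt8 (r c₀ γ k₀ : ℝ) (hr : 0 < r) (hc₀ : 0 < c₀) (hγ : γ ∈ Set.Ioo (0 : ℝ) 1)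
    (hk₀1 : 1 ≤ k₀) (hk₀ : (2 * γ / (r * c₀)) ^ (1 / (1 - γ)) ≤ k₀)
    (α : ℕ → ℝ) (hα : ∀ k : ℕ, α k = c₀ / ((k : ℝ) + k₀) ^ γ)
    (k : ℕ) :
    α k / α (k + 1) ≤ 1 + r * α (k + 1) := by
  obtain ⟨hγ0, hγ1⟩ := hγ
  have hγ' : 0 < 1 - γ := by linarith
  obtain ⟨x, hx⟩ : ∃ x : ℝ, x = (k : ℝ) + k₀ := ⟨_, rfl⟩
  have hkx : k₀ ≤ x := by rw [hx]; linarith [Nat.cast_nonneg (α := ℝ) k]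
  have hx1 : 1 ≤ x := hk₀1.trans hkx
  have hx0 : 0 < x := by linarith
  have hpow : 2 * γ ≤ r * c₀ * x ^ (1 - γ) := by
    have h := Real.rpow_le_rpow (by positivity) (hk₀.trans hkx) hγ'.le
    rw [← Real.rpow_mul (by positivity), one_div_mul_cancel hγ'.ne', Real.rpow_one,
      div_le_iff₀ (by positivity)] at h
    linarith
  have hbernoulli : ((x + 1) / x) ^ γ ≤ 1 + γ / x := by
    have h := rpow_one_add_le_one_add_mul_self (s := 1 / x) (p := γ)
      (by linarith [one_div_pos.mpr hx0]) hγ0.le hγ1.le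
    rwa [mul_one_div, show 1 + 1 / x = (x + 1) / x by field_simp] at h
  have hdouble : (x + 1) ^ γ ≤ 2 * x ^ γ := by
    calc (x + 1) ^ γ ≤ (2 * x) ^ γ := Real.rpow_le_rpow (by linarith) (by linarith) hγ0.le
      _ = 2 ^ γ * x ^ γ := Real.mul_rpow (by norm_num) hx0.le
      _ ≤ 2 * x ^ γ := by
        gcongr
        exact Real.rpow_le_self_of_one_le (by norm_num) hγ1.le
  have hsplit : x ^ (1 - γ) * x ^ γ = x := by
    rw [← Real.rpow_add hx0, sub_add_cancel, Real.rpow_one]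
  have hstep : γ / x ≤ r * (c₀ / (x + 1) ^ γ) := by
    rw [← mul_div_assoc, div_le_div_iff₀ hx0 (by positivity)]
    calc γ * (x + 1) ^ γ ≤ γ * (2 * x ^ γ) := by gcongr
      _ = 2 * γ * x ^ γ := by ring
      _ ≤ r * c₀ * x ^ (1 - γ) * x ^ γ := by gcongr
      _ = r * c₀ * x := by rw [mul_assoc, hsplit]
  have hratio : c₀ / x ^ γ / (c₀ / (x + 1) ^ γ) = ((x + 1) / x) ^ γ := by
    rw [Real.div_rpow (by linarith) hx0.le, div_div_div_cancel_left' _ _ hc₀.ne']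
  rw [hα, hα, Nat.cast_succ, show (k : ℝ) + 1 + k₀ = x + 1 by rw [hx]; ring, ← hx, hratio]
  linarith
end

section
/- Let b > 0, γ ∈ (0,1), c₀·b ≤ 1/2, k₀ ≥ 1 with k₀ ≥ (8γ/(b·c₀))^{1/(1−γ)}, and set α_k = c₀/(k+k₀)^γ. Then for every q ∈ (1, 3] and every integer k ≥ 1, Σ_{j=1}^{k} α_j^q · ∏_{ℓ=j+1}^{k} (1 − α_ℓ·b) ≤ (4/b) · α_k^{q−1}, where the product over an empty index range equals 1. -/
open Finset

theorem sum_mul_prod_Icc_succ (u v : ℕ → ℝ) (n : ℕ) :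
    ∑ j ∈ Icc 1 (n + 1), u j * ∏ ℓ ∈ Icc (j + 1) (n + 1), v ℓ =
      v (n + 1) * (∑ j ∈ Icc 1 n, u j * ∏ ℓ ∈ Icc (j + 1) n, v ℓ) + u (n + 1) := by
  rw [sum_Icc_succ_top (by omega), mul_sum]
  congr 1
  · refine sum_congr rfl fun j hj => ?_
    have hjn := (mem_Icc.mp hj).2
    rw [prod_Icc_succ_top (by omega)]
    ring
  · simp

/-- One step of the recursion preserves the bound `4 / b * a ^ (q - 1)` when the step size
decreases by a factor of at most `exp (-δ)` with `(q - 1) * δ ≤ a * b / 2`. -/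
theorem step_bound {a a' b δ q : ℝ} (hb : 0 < b) (ha : 0 < a) (ha' : 0 ≤ a') (hq : 1 ≤ q)
    (hab : a * b ≤ 1 / 2) (hle : a' ≤ a * Real.exp δ) (hδ : δ * (q - 1) ≤ a * b / 2) :
    (1 - a * b) * (4 / b * a' ^ (q - 1)) + a ^ q ≤ 4 / b * a ^ (q - 1) := by
  have hpow : 0 < a ^ (q - 1) := Real.rpow_pos_of_pos ha _
  have ht : 0 < a * b := mul_pos ha hb
  have hexp : Real.exp (a * b / 2) * (1 - a * b / 2) ≤ 1 := by
    have h := Real.add_one_le_exp (-(a * b / 2))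
    calc Real.exp (a * b / 2) * (1 - a * b / 2)
        ≤ Real.exp (a * b / 2) * Real.exp (-(a * b / 2)) := by gcongr; linarith
      _ = 1 := by rw [← Real.exp_add]; simp
  have hratio : a' ^ (q - 1) ≤ a ^ (q - 1) * Real.exp (a * b / 2) :=
    calc a' ^ (q - 1) ≤ (a * Real.exp δ) ^ (q - 1) :=
          Real.rpow_le_rpow ha' hle (by linarith)
      _ = a ^ (q - 1) * Real.exp (δ * (q - 1)) := by
          rw [Real.mul_rpow ha.le (Real.exp_pos _).le, ← Real.exp_mul]
      _ ≤ _ := by gcongr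
  have hfactor : (1 - a * b) * Real.exp (a * b / 2) ≤ 1 - a * b / 4 := by
    have h := Real.exp_pos (a * b / 2)
    nlinarith [mul_nonneg ht.le ht.le]
  have hsplit : a ^ q = a ^ (q - 1) * a := by
    rw [← Real.rpow_add_one ha.ne']; congr 1; ring
  calc (1 - a * b) * (4 / b * a' ^ (q - 1)) + a ^ q
      ≤ (1 - a * b) * (4 / b * (a ^ (q - 1) * Real.exp (a * b / 2))) + a ^ (q - 1) * a := by
        rw [hsplit]; gcongr; linarith
    _ = 4 / b * a ^ (q - 1) * ((1 - a * b) * Real.exp (a * b / 2) + a * b / 4) := by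
        field_simp
    _ ≤ 4 / b * a ^ (q - 1) * 1 := by gcongr; linarith
    _ = _ := mul_one _

theorem stmt9 (b c₀ γ k₀ : ℝ) (hb : 0 < b) (hc₀ : 0 < c₀) (hγ : γ ∈ Set.Ioo (0 : ℝ) 1)
    (hcb : c₀ * b ≤ 1 / 2) (hk₀1 : 1 ≤ k₀)
    (hk₀ : (8 * γ / (b * c₀)) ^ (1 / (1 - γ)) ≤ k₀)
    (α : ℕ → ℝ) (hα : ∀ k : ℕ, α k = c₀ / ((k : ℝ) + k₀) ^ γ)
    (q : ℝ) (hq : q ∈ Set.Ioc (1 : ℝ) 3) (k : ℕ) (hk : 1 ≤ k) :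
    ∑ j ∈ Finset.Icc 1 k, (α j) ^ q * ∏ ℓ ∈ Finset.Icc (j + 1) k, (1 - α ℓ * b)
      ≤ (4 / b) * (α k) ^ (q - 1) := by
  obtain ⟨hγ0, hγ1⟩ := hγ
  obtain ⟨hq1, hq3⟩ := hq
  have hαpos (n : ℕ) : 0 < α n := by rw [hα]; positivity
  have hαb (n : ℕ) : α n * b ≤ 1 / 2 := by
    have hone : 1 ≤ ((n : ℝ) + k₀) ^ γ :=
      Real.one_le_rpow (by linarith [n.cast_nonneg (α := ℝ)]) hγ0.le
    calc α n * b ≤ c₀ * b := by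
          rw [hα]; gcongr; exact div_le_self hc₀.le hone
      _ ≤ 1 / 2 := hcb
  have hαlower (n : ℕ) : 8 * γ / (n + k₀) ≤ α n * b := by
    have hx : 0 < (n : ℝ) + k₀ := by positivity
    have hle : (8 * γ / (b * c₀)) ^ (1 / (1 - γ)) ≤ n + k₀ := by
      linarith [n.cast_nonneg (α := ℝ)]
    rw [one_div, Real.rpow_inv_le_iff_of_pos (by positivity) hx.le (by linarith),
      Real.rpow_sub hx, Real.rpow_one,
      div_le_div_iff₀ (by positivity) (by positivity)] at hle
    rw [hα, div_mul_eq_mul_div, div_le_div_iff₀ hx (by positivity)]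
    linarith
  have hαstep (n : ℕ) : α n ≤ α (n + 1) * Real.exp (γ / (n + k₀)) := by
    have hy : 0 < (n : ℝ) + k₀ := by positivity
    have hbase : ((n + 1 : ℕ) : ℝ) + k₀ ≤ (n + k₀) * Real.exp (1 / (n + k₀)) := by
      calc ((n + 1 : ℕ) : ℝ) + k₀ = (n + k₀) * (1 / (n + k₀) + 1) := by
            push_cast; field_simp; ring
        _ ≤ _ := by gcongr; exact Real.add_one_le_exp _
    have hpow := Real.rpow_le_rpow (by positivity) hbase hγ0.le
    rw [Real.mul_rpow hy.le (Real.exp_pos _).le, ← Real.exp_mul, one_div_mul_eq_div] at hpow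
    rw [hα, hα, div_mul_eq_mul_div, div_le_div_iff₀ (by positivity) (by positivity)]
    nlinarith
  clear hk
  induction k with
  | zero =>
    have := Real.rpow_pos_of_pos (hαpos 0) (q - 1)
    simpa using by positivity
  | succ n ih =>
    rw [sum_mul_prod_Icc_succ (fun j => α j ^ q) (fun ℓ => 1 - α ℓ * b)]
    have hδ : γ / (n + k₀) * (q - 1) ≤ α (n + 1) * b / 2 := by
      have hn := n.cast_nonneg (α := ℝ)
      have hlow := hαlower (n + 1)
      have hcmp : γ / (n + k₀) * (q - 1) ≤ 8 * γ / ((n + 1 : ℕ) + k₀) / 2 := by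
        push_cast
        rw [div_mul_eq_mul_div, div_div, div_le_div_iff₀ (by positivity) (by positivity)]
        nlinarith [mul_nonneg hγ0.le (mul_nonneg (sub_nonneg.2 hq3) (by linarith : 0 ≤ n + 1 + k₀)),
          mul_nonneg hγ0.le (by linarith : 0 ≤ n + k₀ - 1)]
      linarith
    refine le_trans ?_ (step_bound hb (hαpos (n + 1)) (hαpos n).le hq1.le (hαb _) (hαstep n) hδ)
    have := hαb (n + 1)
    gcongr
    linarith
end

section
/- Let Ā ∈ ℝ^{d×d} be invertible, let (α_ℓ) be any real sequence, and fix a horizon n ≥ 2. Then for every 1 ≤ ℓ ≤ n−1, Q_ℓ − Ā^{−1} = S_ℓ − Ā^{−1} G_{ℓ:n−1}, and moreover Σ_{i=1}^{n−1} (Q_i − Ā^{−1}) = − Ā^{−1} Σ_{j=1}^{n−1} G_{1:j}. -/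
open Matrix Finset Set

/-- The `Q`-weighted vector norm `‖x‖_Q = √(xᵀ Q x)`. -/
noncomputable def qVecNorm {d : ℕ} (Q : Matrix (Fin d) (Fin d) ℝ) (x : Fin d → ℝ) : ℝ :=
  Real.sqrt (x ⬝ᵥ Q.mulVec x)

/-- The induced matrix `Q`-norm `‖B‖_Q = sup_{x ≠ 0} ‖Bx‖_Q / ‖x‖_Q`. -/
noncomputable def qMatNorm {d : ℕ} (Q B : Matrix (Fin d) (Fin d) ℝ) : ℝ :=
  ⨆ x : {x : Fin d → ℝ // x ≠ 0}, qVecNorm Q (B.mulVec x.1) / qVecNorm Q x.1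

/-- The spectral (operator) norm, i.e. the matrix norm induced by the Euclidean vector norm. -/
noncomputable def specNorm {d : ℕ} (B : Matrix (Fin d) (Fin d) ℝ) : ℝ :=
  qMatNorm 1 B

/-- Smallest eigenvalue of a (symmetric) matrix, as the infimum of its real spectrum. -/
noncomputable def lamMin {d : ℕ} (P : Matrix (Fin d) (Fin d) ℝ) : ℝ :=
  sInf (spectrum ℝ P)

/-- Largest eigenvalue of a (symmetric) matrix, as the supremum of its real spectrum. -/
noncomputable def lamMax {d : ℕ} (P : Matrix (Fin d) (Fin d) ℝ) : ℝ :=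
  sSup (spectrum ℝ P)

/-- `-A` is Hurwitz: every (complex) eigenvalue of `A` has strictly positive real part. -/
def NegHurwitz {d : ℕ} (A : Matrix (Fin d) (Fin d) ℝ) : Prop :=
  ∀ μ ∈ spectrum ℂ (A.map (fun x : ℝ => (x : ℂ))), 0 < μ.re

/-- The matrix product `G_{m:k} = ∏_{ℓ=m}^{k} (I - α_ℓ Ā)` (with `G_{m:k} = I` for `m > k`);
all factors commute, and the convention `∏_{ℓ=m}^{k} A_ℓ = A_k ⋯ A_m` is used. -/
noncomputable def Gprod {d : ℕ} (Abar : Matrix (Fin d) (Fin d) ℝ) (α : ℕ → ℝ) (m : ℕ) :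
    ℕ → Matrix (Fin d) (Fin d) ℝ
  | 0 => if m = 0 then (1 : Matrix (Fin d) (Fin d) ℝ) - α 0 • Abar else 1
  | k + 1 =>
      if m ≤ k + 1 then
        ((1 : Matrix (Fin d) (Fin d) ℝ) - α (k + 1) • Abar) * Gprod Abar α m k
      else 1

/-- `Q_ℓ = α_ℓ ∑_{k=ℓ}^{n-1} G_{ℓ+1:k}` for a fixed horizon `n`. -/
noncomputable def Qmat {d : ℕ} (Abar : Matrix (Fin d) (Fin d) ℝ) (α : ℕ → ℝ) (n ℓ : ℕ) :
    Matrix (Fin d) (Fin d) ℝ :=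
  α ℓ • ∑ k ∈ Finset.Icc ℓ (n - 1), Gprod Abar α (ℓ + 1) k

/-- `S_ℓ = ∑_{j=ℓ+1}^{n-1} (α_ℓ - α_j) G_{ℓ+1:j-1}` for a fixed horizon `n`. -/
noncomputable def Smat {d : ℕ} (Abar : Matrix (Fin d) (Fin d) ℝ) (α : ℕ → ℝ) (n ℓ : ℕ) :
    Matrix (Fin d) (Fin d) ℝ :=
  ∑ j ∈ Finset.Icc (ℓ + 1) (n - 1), (α ℓ - α j) • Gprod Abar α (ℓ + 1) (j - 1)

section Gprod

variable {d : ℕ} (A : Matrix (Fin d) (Fin d) ℝ) (α : ℕ → ℝ)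

theorem Gprod_succ {m k : ℕ} (h : m ≤ k + 1) :
    Gprod A α m (k + 1) = (1 - α (k + 1) • A) * Gprod A α m k := by
  rw [Gprod, if_pos h]

theorem Gprod_of_lt {m k : ℕ} (h : k < m) : Gprod A α m k = 1 := by
  cases k with
  | zero => rw [Gprod, if_neg (by omega)]
  | succ k => rw [Gprod, if_neg (by omega)]

theorem Gprod_self (m : ℕ) : Gprod A α m m = 1 - α m • A := by
  cases m with
  | zero => simp [Gprod]
  | succ m => rw [Gprod_succ A α le_rfl, Gprod_of_lt A α m.lt_succ_self, mul_one]

theorem commute_one_sub_smul (a b : ℝ) : Commute (1 - a • A) (1 - b • A) :=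
  (Commute.one_left _).sub_left
    ((Commute.one_right _).sub_right (((Commute.refl A).smul_left a).smul_right b))

/-- The first factor of `G_{m:k}` can be split off. -/
theorem Gprod_eq_mul_Gprod_succ {m k : ℕ} (h : m ≤ k) :
    Gprod A α m k = (1 - α m • A) * Gprod A α (m + 1) k := by
  induction k, h using Nat.le_induction with
  | base => rw [Gprod_self, Gprod_of_lt A α m.lt_succ_self, mul_one]
  | succ k hk ih =>
    rw [Gprod_succ A α (by omega), Gprod_succ A α (by omega), ih, ← mul_assoc, ← mul_assoc,
      (commute_one_sub_smul A (α (k + 1)) (α m)).eq]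

/-- Telescoping over the lower index. -/
theorem mul_sum_smul_Gprod (k : ℕ) :
    A * ∑ i ∈ Finset.Icc 1 k, α i • Gprod A α (i + 1) k = 1 - Gprod A α 1 k := by
  induction k with
  | zero => simp [Gprod_of_lt]
  | succ k ih =>
    have hsum : ∑ i ∈ Finset.Icc 1 k, α i • Gprod A α (i + 1) (k + 1)
        = (1 - α (k + 1) • A) * ∑ i ∈ Finset.Icc 1 k, α i • Gprod A α (i + 1) k := by
      rw [Finset.mul_sum]
      refine Finset.sum_congr rfl fun i hi => ?_
      rw [Gprod_succ A α (by have := (Finset.mem_Icc.mp hi).2; omega), mul_smul_comm]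
    have hcomm : A * (1 - α (k + 1) • A) = (1 - α (k + 1) • A) * A := by
      simp [mul_sub, sub_mul]
    rw [Finset.sum_Icc_succ_top (by omega), hsum, Gprod_of_lt A α (Nat.lt_succ_self (k + 1)),
      Gprod_succ A α (by omega), mul_add, ← mul_assoc, hcomm, mul_assoc, ih, mul_sub, mul_one,
      mul_smul_comm, mul_one]
    abel

variable {A}

theorem Qmat_sub_inv (hA : IsUnit A.det) {l N : ℕ} (h : l ≤ N) :
    Qmat A α (N + 1) l - A⁻¹ = Smat A α (N + 1) l - A⁻¹ * Gprod A α l N := by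
  simp only [Qmat, Smat, Nat.add_sub_cancel]
  induction N, h using Nat.le_induction with
  | base =>
    simp [Gprod_self, Gprod_of_lt, mul_sub, Matrix.nonsing_inv_mul A hA]
  | succ N hN ih =>
    have hG : A⁻¹ * Gprod A α l (N + 1) = A⁻¹ * Gprod A α l N - α (N + 1) • Gprod A α l N := by
      rw [Gprod_succ A α (by omega), ← mul_assoc, mul_sub, mul_one, mul_smul_comm,
        Matrix.nonsing_inv_mul A hA, sub_mul, smul_mul_assoc, one_mul]
    have hQ : α l • Gprod A α (l + 1) (N + 1)
        = (α l - α (N + 1)) • Gprod A α (l + 1) N + α (N + 1) • Gprod A α l N := by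
      rw [Gprod_succ A α (by omega), Gprod_eq_mul_Gprod_succ A α hN]
      simp only [sub_mul, one_mul, smul_mul_assoc, smul_sub, sub_smul, smul_smul,
        mul_comm (α l)]
      abel
    rw [Finset.sum_Icc_succ_top (by omega), Finset.sum_Icc_succ_top (by omega), smul_add, hG, hQ,
      Nat.add_sub_cancel, add_sub_right_comm, ih]
    abel

theorem sum_Qmat_sub_inv (hA : IsUnit A.det) (N : ℕ) :
    ∑ i ∈ Finset.Icc 1 N, (Qmat A α (N + 1) i - A⁻¹)
      = -(A⁻¹ * ∑ j ∈ Finset.Icc 1 N, Gprod A α 1 j) := by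
  induction N with
  | zero => simp
  | succ N ih =>
    have hQ : ∀ i ∈ Finset.Icc 1 N, Qmat A α (N + 1 + 1) i - A⁻¹
        = (Qmat A α (N + 1) i - A⁻¹) + α i • Gprod A α (i + 1) (N + 1) := by
      intro i hi
      simp only [Qmat, Nat.add_sub_cancel]
      rw [Finset.sum_Icc_succ_top (by have := (Finset.mem_Icc.mp hi).2; omega), smul_add]
      abel
    have hlast : Qmat A α (N + 1 + 1) (N + 1) = α (N + 1) • Gprod A α (N + 1 + 1) (N + 1) := by
      simp [Qmat]
    have htel : ∑ i ∈ Finset.Icc 1 (N + 1), α i • Gprod A α (i + 1) (N + 1)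
        = A⁻¹ - A⁻¹ * Gprod A α 1 (N + 1) := by
      rw [← Matrix.nonsing_inv_mul_cancel_left A (∑ i ∈ Finset.Icc 1 (N + 1), _) hA,
        mul_sum_smul_Gprod, mul_sub, mul_one]
    rw [Finset.sum_Icc_succ_top (by omega)] at htel
    rw [Finset.sum_Icc_succ_top (by omega), Finset.sum_Icc_succ_top (by omega),
      Finset.sum_congr rfl hQ, Finset.sum_add_distrib, ih, hlast, mul_add, add_assoc,
      ← add_sub_assoc, htel]
    abel

end Gprod

theorem stmt13 {d : ℕ} (Abar : Matrix (Fin d) (Fin d) ℝ) (hA : IsUnit Abar.det)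
    (α : ℕ → ℝ) (n : ℕ) (hn : 2 ≤ n) :
    (∀ ℓ : ℕ, 1 ≤ ℓ → ℓ ≤ n - 1 →
        Qmat Abar α n ℓ - Abar⁻¹
          = Smat Abar α n ℓ - Abar⁻¹ * Gprod Abar α ℓ (n - 1)) ∧
    (∑ i ∈ Finset.Icc 1 (n - 1), (Qmat Abar α n i - Abar⁻¹)
        = -(Abar⁻¹ * ∑ j ∈ Finset.Icc 1 (n - 1), Gprod Abar α 1 j)) := by
  obtain ⟨N, rfl⟩ : ∃ N, n = N + 1 := ⟨n - 1, by omega⟩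
  exact ⟨fun _ _ hl => Qmat_sub_inv α hA hl, sum_Qmat_sub_inv α hA N⟩
end
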